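/- arXiv:2101.01458 — 2 statements merged into one kernel-verified Lean document; each statement's English description precedes it below -/
import Mathlib

section
/- Let $G$ be an infinite countable discrete group, $\mathcal{T}$ a syndetic finite tiling of $G$ with set of shapes $\mathcal{S}_{\mathcal{T}}$, where every shape contains the identity element $e$. Then there exist a nonempty finite subset $K'$ of $G$ and $\epsilon' > 0$ such that every $(K',\epsilon')$-invariant nonempty finite subset $F$ of $G$ contains, for each shape $S \in \mathcal{S}_{\mathcal{T}}$, at least one $\mathcal{T}$-tile of the shape $S$ (i.e., there is $c \in C(S)$ with $Sc \subset F$). -/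
open Set Filter Topology
open scoped ENNReal NNReal symmDiff

/-- Right translate `S·c = {s * c : s ∈ S}` of a subset of a group. -/
def rightTranslate {G : Type*} [Group G] (S : Set G) (c : G) : Set G := (fun s => s * c) '' S

/-- The boundary set `B(F,T) = {g ∈ G : Tg ∩ F ≠ ∅ and Tg ∩ (G \ F) ≠ ∅}`. -/
def Bset {G : Type*} [Group G] (F T : Set G) : Set G :=
  {g : G | (rightTranslate T g ∩ F).Nonempty ∧ (rightTranslate T g ∩ Fᶜ).Nonempty}

/-- `F` is `(T,ε)`-invariant: `|B(F,T)| < ε * |F|`. -/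
def IsInvariantSet {G : Type*} [Group G] (F T : Set G) (ε : ℝ) : Prop :=
  ((Bset F T).ncard : ℝ) < ε * (F.ncard : ℝ)

/-- A Følner sequence of nonempty finite subsets of `G`. -/
def IsFolnerSeq {G : Type*} [Group G] (F : ℕ → Set G) : Prop :=
  (∀ n, (F n).Finite ∧ (F n).Nonempty) ∧
    ∀ g : G, Tendsto
      (fun n => ((symmDiff (F n) ((fun x => g * x) '' (F n))).ncard : ℝ) / ((F n).ncard : ℝ))
      atTop (nhds 0)

/-- A countable discrete group is amenable if it admits a Følner sequence. -/
def AmenableGroup (G : Type*) [Group G] : Prop := ∃ F : ℕ → Set G, IsFolnerSeq F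

/-- A tiling of `G`: pairwise disjoint nonempty finite subsets covering `G`. -/
def IsTilingOf {G : Type*} [Group G] (𝒯 : Set (Set G)) : Prop :=
  (∀ T ∈ 𝒯, T.Finite ∧ T.Nonempty) ∧
    (∀ T ∈ 𝒯, ∀ T' ∈ 𝒯, T ≠ T' → Disjoint T T') ∧ ⋃₀ 𝒯 = Set.univ

/-- `𝒮` is a (finite) set of shapes for the tiling `𝒯`. -/
def IsShapeSet {G : Type*} [Group G] (𝒯 𝒮 : Set (Set G)) : Prop :=
  𝒮.Finite ∧ (∀ S ∈ 𝒮, S.Finite ∧ S.Nonempty) ∧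
    ∀ T ∈ 𝒯, ∃ S ∈ 𝒮, ∃ c : G, T = rightTranslate S c

/-- The center of a shape `S` relative to a tiling `𝒯`. -/
def center {G : Type*} [Group G] (𝒯 : Set (Set G)) (S : Set G) : Set G :=
  {c : G | rightTranslate S c ∈ 𝒯}

/-- A syndetic subset: `G = F·A` for some finite `F`. -/
def SyndeticSet {G : Type*} [Group G] (A : Set G) : Prop :=
  ∃ F : Set G, F.Finite ∧ Set.image2 (· * ·) F A = Set.univ

/-- The translation `𝒯g = {Tg : T ∈ 𝒯}` of a tiling. -/
def tilingTranslate {G : Type*} [Group G] (𝒯 : Set (Set G)) (g : G) : Set (Set G) :=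
  (fun T => rightTranslate T g) '' 𝒯

/-- The restriction `𝒯|_F = {T ∩ F : T ∈ 𝒯}`. -/
def tilingRestrict {G : Type*} [Group G] (𝒯 : Set (Set G)) (F : Set G) : Set (Set G) :=
  (fun T => T ∩ F) '' 𝒯

/-- The full `G`-shift: `(σ_g x)_h = x_{hg}`. -/
def shift {G K : Type*} [Group G] (g : G) (x : G → K) : G → K := fun h => x (h * g)

/-- A subshift: a closed shift-invariant subset of `K^G`. -/
def IsSubshift {G : Type*} (K : Type*) [Group G] [TopologicalSpace K]
    (X : Set (G → K)) : Prop :=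
  IsClosed X ∧ ∀ g : G, ∀ x ∈ X, shift g x ∈ X

/-- A weight `α : G → (0,∞)` with `α e = 1` and `∑ α < ∞`, defining the product metric. -/
def IsGoodWeight {G : Type*} [Group G] (α : G → ℝ) : Prop :=
  α 1 = 1 ∧ (∀ g, 0 < α g) ∧ Summable α

/-- The metric `ρ(x,y) = ∑_g α_g d(x_g, y_g)` on `K^G`. -/
noncomputable def rhoMetric {G K : Type*} [Group G] [PseudoMetricSpace K] (α : G → ℝ)
    (x y : G → K) : ℝ :=
  ∑' g : G, α g * dist (x g) (y g)

/-- `ρ_F(x,y) = max_{g ∈ F} ρ(gx, gy)` for finite `F ⊆ G`. -/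
noncomputable def rhoMetricF {G K : Type*} [Group G] [PseudoMetricSpace K] (α : G → ℝ)
    (F : Set G) (x y : G → K) : ℝ :=
  sSup ((fun g => rhoMetric α (shift g x) (shift g y)) '' F)

/-- `d_F(x,y) = max_{g∈F} d(gx, gy)` for an action `φ`. -/
noncomputable def dynDist {G X : Type*} [Group G] [PseudoMetricSpace X]
    (φ : G → X → X) (F : Set G) (x y : X) : ℝ :=
  sSup ((fun g => dist (φ g x) (φ g y)) '' F)

/-- An `ε`-embedding w.r.t. `ρ`: continuous, and `f x = f y → ρ x y < ε`. -/
def IsEpsEmb {X Y : Type*} [TopologicalSpace X] [TopologicalSpace Y]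
    (ρ : X → X → ℝ) (ε : ℝ) (f : X → Y) : Prop :=
  Continuous f ∧ ∀ x y, f x = f y → ρ x y < ε

/-- `Widim_ε(X,ρ) ≤ n`: there is an `ε`-embedding of `X` into (the geometric realization of)
a finite simplicial complex all of whose faces have at most `n+1` vertices. -/
def WidimLE (X : Type*) [TopologicalSpace X] (ρ : X → X → ℝ) (ε : ℝ) (n : ℕ) : Prop :=
  ∃ (N : ℕ) (P : Geometry.SimplicialComplex ℝ (Fin N → ℝ)),
    P.faces.Finite ∧ (∀ s ∈ P.faces, s.card ≤ n + 1) ∧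
      ∃ f : X → P.space, IsEpsEmb ρ ε f

/-- `Widim_ε(X,ρ)`: the minimum dimension of a polyhedron admitting an `ε`-embedding of `X`. -/
noncomputable def widim (X : Type*) [TopologicalSpace X] (ρ : X → X → ℝ) (ε : ℝ) : ℕ∞ :=
  sInf {n : ℕ∞ | ∃ m : ℕ, n = (m : ℕ∞) ∧ WidimLE X ρ ε m}

/-- Covering dimension `≤ n`: every open cover admits an open refinement of multiplicity `≤ n+1`. -/
def DimLE (X : Type*) [TopologicalSpace X] (n : ℕ) : Prop :=
  ∀ 𝒰 : Set (Set X), (∀ U ∈ 𝒰, IsOpen U) → ⋃₀ 𝒰 = Set.univ →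
    ∃ 𝒱 : Set (Set X), (∀ V ∈ 𝒱, IsOpen V) ∧ ⋃₀ 𝒱 = Set.univ ∧
      (∀ V ∈ 𝒱, ∃ U ∈ 𝒰, V ⊆ U) ∧
      ∀ x : X, ({V ∈ 𝒱 | x ∈ V}).Finite ∧ ({V ∈ 𝒱 | x ∈ V}).ncard ≤ n + 1

/-- Topological (covering) dimension, valued in `ℕ∞`. -/
noncomputable def covDim (X : Type*) [TopologicalSpace X] : ℕ∞ :=
  sInf {n : ℕ∞ | ∃ m : ℕ, n = (m : ℕ∞) ∧ DimLE X m}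

/-- Mean dimension of the action `φ` computed along the Følner sequence `F`
(as `sup_{ε>0} limsup_n Widim_ε(X, d_{F_n}) / |F_n|`). -/
noncomputable def mdimAlong {G X : Type*} [Group G] [PseudoMetricSpace X]
    (φ : G → X → X) (F : ℕ → Set G) : ℝ≥0∞ :=
  ⨆ ε : {ε : ℝ // 0 < ε}, Filter.limsup
    (fun n => ((widim X (dynDist φ (F n)) ε.1 : ℕ∞) : ℝ≥0∞) / ((F n).ncard : ℝ≥0∞)) atTop

/-- Mean dimension of a subshift `X ⊆ K^G` computed along the Følner sequence `F`,
with the metric `ρ` induced by the weight `α`. -/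
noncomputable def mdimSubshift {G K : Type*} [Group G] [PseudoMetricSpace K] (α : G → ℝ)
    (X : Set (G → K)) (F : ℕ → Set G) : ℝ≥0∞ :=
  ⨆ ε : {ε : ℝ // 0 < ε}, Filter.limsup
    (fun n => ((widim X (fun x y : X => rhoMetricF α (F n) x.1 y.1) ε.1 : ℕ∞) : ℝ≥0∞) /
      ((F n).ncard : ℝ≥0∞)) atTop

/-- The canonical projection `π_F : K^G → K^F`. -/
def projTo {G K : Type*} (F : Set G) (x : G → K) : F → K := fun g => x g.1

/-- The tripod (cone over three points), realized as the subset of `ℝ³` of points with at most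
one nonzero coordinate, each coordinate lying in `[0,1]`; the ℓ¹-distance on this set is exactly
the graph distance in which each of the three edges has length one. -/
def TripodSet : Set (Fin 3 → ℝ) :=
  {x | (∀ i, x i ∈ Set.Icc (0 : ℝ) 1) ∧ ∀ i j : Fin 3, i ≠ j → x i = 0 ∨ x j = 0}

/-- The graph distance on the tripod (= the ℓ¹-distance of the ambient `ℝ³`). -/
noncomputable def tripodDist (x y : TripodSet) : ℝ := ∑ i, |x.1 i - y.1 i|

/-- The `l^∞`-distance on `P^n` for the tripod `P`. -/
noncomputable def tripodDistInf {n : ℕ} (x y : Fin n → TripodSet) : ℝ :=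
  sSup (Set.range fun i => tripodDist (x i) (y i))

/-!
If `G = EA`, then `g = fc` with `f ∈ E` and `c ∈ A`, so `Sc = Sf⁻¹g ⊆ (SE⁻¹)g`. Thus a finite `K`
containing `SE⁻¹` for every shape `S` has the property that each translate `Kg` contains a tile of
each shape. A set `F` whose `K`-boundary has fewer than `|F|` elements contains some `Kg`.
-/

section

open scoped Pointwise

variable {G : Type*} [Group G] {F T S A : Set G}

theorem rightTranslate_rightTranslate (S : Set G) (a b : G) :
    rightTranslate (rightTranslate S a) b = rightTranslate S (a * b) := by
  simp only [rightTranslate, image_image, mul_assoc]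

theorem finite_Bset (hF : F.Finite) (hT : T.Finite) : (Bset F T).Finite := by
  refine (hT.inv.mul hF).subset ?_
  rintro g ⟨⟨_, ⟨t, ht, rfl⟩, htg⟩, -⟩
  exact ⟨t⁻¹, inv_mem_inv.mpr ht, t * g, htg, inv_mul_cancel_left t g⟩

/- For `t ∈ T`, every `g ∈ t⁻¹F` has `Tg` meeting `F`, so either `Tg ⊆ F` or `g ∈ B(F,T)`; the
boundary is too small to contain all of `t⁻¹F`. -/
theorem IsInvariantSet.exists_rightTranslate_subset (hinv : IsInvariantSet F T 1)
    (hF : F.Finite) (hT : T.Finite) (hne : T.Nonempty) : ∃ g, rightTranslate T g ⊆ F := by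
  obtain ⟨t, ht⟩ := hne
  have hlt : (Bset F T).ncard < (t⁻¹ • F).ncard := by
    rw [Set.ncard_smul_set]
    exact_mod_cast hinv.trans_eq (one_mul _)
  obtain ⟨g, hgF, hgB⟩ := exists_mem_notMem_of_ncard_lt_ncard hlt (finite_Bset hF hT)
  have hmeets : (rightTranslate T g ∩ F).Nonempty :=
    ⟨t * g, mem_image_of_mem _ ht, mem_inv_smul_set_iff.mp hgF⟩
  refine ⟨g, fun x hx => ?_⟩
  by_contra hxF
  exact hgB ⟨hmeets, x, hx, hxF⟩

theorem SyndeticSet.exists_finite_forall_rightTranslate_subset (hA : SyndeticSet A)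
    (hS : S.Finite) :
    ∃ K : Set G, K.Finite ∧ ∀ g, ∃ c ∈ A, rightTranslate S c ⊆ rightTranslate K g := by
  obtain ⟨E, hE, hEA⟩ := hA
  refine ⟨S * E⁻¹, hS.mul hE.inv, fun g => ?_⟩
  obtain ⟨f, hf, c, hc, rfl⟩ : g ∈ image2 (· * ·) E A := hEA ▸ mem_univ g
  refine ⟨c, hc, ?_⟩
  calc rightTranslate S c = rightTranslate (rightTranslate S f⁻¹) (f * c) := by
        rw [rightTranslate_rightTranslate, inv_mul_cancel_left]
    _ ⊆ rightTranslate (S * E⁻¹) (f * c) :=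
        image_mono (image_subset_iff.mpr fun s hs => mul_mem_mul hs (inv_mem_inv.mpr hf))

theorem invariant_set_contains_tile_of_each_shape_general {𝒮 : Set (Set G)}
    {C : Set G → Set G} (h𝒮 : 𝒮.Finite) (hfin : ∀ S ∈ 𝒮, S.Finite)
    (hsyn : ∀ S ∈ 𝒮, SyndeticSet (C S)) :
    ∃ K : Set G, K.Finite ∧ K.Nonempty ∧ ∀ F : Set G, F.Finite → IsInvariantSet F K 1 →
      ∀ S ∈ 𝒮, ∃ c ∈ C S, rightTranslate S c ⊆ F := by
  choose! K hK hKC using fun S hS =>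
    (hsyn S hS).exists_finite_forall_rightTranslate_subset (hfin S hS)
  have hUfin : (insert 1 (⋃ S ∈ 𝒮, K S)).Finite := (h𝒮.biUnion hK).insert 1
  have hUne : (insert 1 (⋃ S ∈ 𝒮, K S)).Nonempty := insert_nonempty _ _
  refine ⟨_, hUfin, hUne, fun F hF hinv S hS => ?_⟩
  obtain ⟨g, hgF⟩ := hinv.exists_rightTranslate_subset hF hUfin hUne
  obtain ⟨c, hc, hcg⟩ := hKC S hS g
  have hKU : K S ⊆ insert 1 (⋃ S ∈ 𝒮, K S) :=
    (subset_biUnion_of_mem hS).trans (subset_insert _ _)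
  exact ⟨c, hc, hcg.trans ((image_mono hKU).trans hgF)⟩

end

/-- **Claim.** Let `𝒯` be a syndetic finite tiling of `G` with shape set `𝒮` such that every
shape contains the identity. Then there exist a nonempty finite `K' ⊆ G` and `ε' > 0` such that
every `(K',ε')`-invariant nonempty finite subset of `G` contains a `𝒯`-tile of each shape. -/
theorem invariant_set_contains_tile_of_each_shape (G : Type*) [Group G] [Countable G]
    [Infinite G] (𝒯 𝒮 : Set (Set G)) (ht : IsTilingOf 𝒯) (hs : IsShapeSet 𝒯 𝒮)
    (hsyn : ∀ S ∈ 𝒮, SyndeticSet (center 𝒯 S)) (hone : ∀ S ∈ 𝒮, (1 : G) ∈ S) :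
    ∃ K' : Set G, K'.Finite ∧ K'.Nonempty ∧ ∃ ε' > (0 : ℝ), ∀ F : Set G,
      F.Finite → F.Nonempty → IsInvariantSet F K' ε' →
        ∀ S ∈ 𝒮, ∃ c ∈ center 𝒯 S, rightTranslate S c ⊆ F := by
  obtain ⟨K, hK, hKne, hcontains⟩ :=
    invariant_set_contains_tile_of_each_shape_general hs.1 (fun S hS => (hs.2.1 S hS).1) hsyn
  exact ⟨K, hK, hKne, 1, one_pos, fun F hF _ => hcontains F hF⟩
end

section
/- Let $G$ be an infinite countable discrete group, $K$ a compact metric space, $(X,\sigma)$ a subshift of $(K^G,\sigma)$, and suppose $f: (X,\sigma) \to ([0,1]^G, \sigma')$ is an embedding into the full $G$-shift on $[0,1]^G$ (a continuous injective $G$-equivariant map). Then for every $\delta > 0$ there exists a nonempty finite subset $A$ of $G$ such that for every nonempty finite subset $E$ of $G$, the composition $\pi_{AE} \circ f : (X, \rho_E) \to [0,1]^{AE}$ is a $\delta$-embedding; that is, for all $x, y \in X$, $f(x)|_{AE} = f(y)|_{AE}$ implies $\rho_E(x,y) < \delta$. -/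
open Set Filter Topology
open scoped ENNReal NNReal symmDiff

/-!
By compactness of `X × X`, injectivity of `f` is detected by finitely many coordinates up to `δ`:
the pairs with `δ ≤ ρ x y` form a compact set off the diagonal, on which the closed conditions
`f x a = f y a` have no common solution, so finitely many `a`, forming `A`, already exclude them
all. Equivariance gives `f (g x) a = f x (a g)`, so agreement of `f x` and `f y` on `A E` is
agreement of `f (g x)` and `f (g y)` on `A` for every `g ∈ E`, and the same `A` serves every `E`.
-/

section Separation

variable {X ι : Type*} {Y : ι → Type*} [TopologicalSpace X] [CompactSpace X]
  [∀ i, TopologicalSpace (Y i)] [∀ i, T2Space (Y i)]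

theorem exists_finset_forall_apply_eq_imp_mem_of_isOpen {f : X → ∀ i, Y i} (hf : Continuous f)
    (hinj : f.Injective) {U : Set (X × X)} (hU : IsOpen U) (hdiag : diagonal X ⊆ U) :
    ∃ A : Finset ι, ∀ x y, (∀ i ∈ A, f x i = f y i) → (x, y) ∈ U := by
  have isClosed_agree (i : ι) : IsClosed {p : X × X | f p.1 i = f p.2 i} :=
    isClosed_eq (by fun_prop) (by fun_prop)
  have no_common_agreement : Uᶜ ∩ ⋂ i, {p : X × X | f p.1 i = f p.2 i} = ∅ := by
    refine eq_empty_of_forall_notMem fun p ⟨hpU, hp⟩ => hpU (hdiag ?_)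
    exact hinj (funext fun i => mem_iInter.mp hp i)
  obtain ⟨A, hA⟩ := hU.isClosed_compl.isCompact.elim_finite_subfamily_closed
    _ isClosed_agree no_common_agreement
  refine ⟨A, fun x y hxy => by_contra fun hxyU => ?_⟩
  exact eq_empty_iff_forall_notMem.mp hA (x, y) ⟨hxyU, mem_iInter₂.mpr hxy⟩

end Separation

section ShiftMetric

variable {G K : Type*} [Group G] [PseudoMetricSpace K] {α : G → ℝ} {X : Set (G → K)}

theorem rhoMetric_self (α : G → ℝ) (x : G → K) : rhoMetric α x x = 0 := by
  simp [rhoMetric]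

theorem rhoMetricF_lt_iff {E : Set G} (hE : E.Finite) (hne : E.Nonempty) {x y : G → K} {δ : ℝ} :
    rhoMetricF α E x y < δ ↔ ∀ g ∈ E, rhoMetric α (shift g x) (shift g y) < δ := by
  rw [rhoMetricF, (hE.image _).csSup_lt_iff (hne.image _), forall_mem_image]

theorem exists_forall_dist_apply_le_of_shift_mem (hX : IsCompact X)
    (hshift : ∀ g : G, ∀ x ∈ X, shift g x ∈ X) :
    ∃ D, ∀ x ∈ X, ∀ y ∈ X, ∀ g, dist (x g) (y g) ≤ D := by
  -- Every coordinate of a point of `X` is the coordinate at `1` of one of its translates.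
  have apply_mem {x : G → K} (hx : x ∈ X) (g : G) : x g ∈ (fun z : G → K => z 1) '' X :=
    ⟨shift g x, hshift g x hx, congrArg x (one_mul g)⟩
  obtain ⟨D, hD⟩ := Metric.isBounded_iff.mp (hX.image (continuous_apply 1)).isBounded
  exact ⟨D, fun x hx y hy g => hD (apply_mem hx g) (apply_mem hy g)⟩

theorem continuousOn_rhoMetric (hα : Summable α) {D : ℝ}
    (hD : ∀ x ∈ X, ∀ y ∈ X, ∀ g, dist (x g) (y g) ≤ D) :
    ContinuousOn (fun p : (G → K) × (G → K) => rhoMetric α p.1 p.2) (X ×ˢ X) := by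
  refine continuousOn_tsum (fun g => by fun_prop) (hα.norm.mul_right D) fun g p hp => ?_
  rw [norm_mul, Real.norm_of_nonneg dist_nonneg]
  gcongr
  exact hD p.1 hp.1 p.2 hp.2 g

theorem exists_finset_forall_apply_eq_imp_rhoMetric_lt {ι : Type*} {Y : ι → Type*}
    [∀ i, TopologicalSpace (Y i)] [∀ i, T2Space (Y i)] (hX : IsCompact X) (hα : Summable α)
    {D : ℝ} (hD : ∀ x ∈ X, ∀ y ∈ X, ∀ g, dist (x g) (y g) ≤ D)
    {f : (G → K) → ∀ i, Y i} (hf : ContinuousOn f X) (hinj : InjOn f X)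
    {δ : ℝ} (hδ : 0 < δ) :
    ∃ A : Finset ι, ∀ x ∈ X, ∀ y ∈ X, (∀ i ∈ A, f x i = f y i) → rhoMetric α x y < δ := by
  have : CompactSpace X := isCompact_iff_compactSpace.mp hX
  have hρ : Continuous fun p : X × X => rhoMetric α p.1.1 p.2.1 :=
    (continuousOn_rhoMetric hα hD).comp_continuous (f := fun p : X × X => (p.1.1, p.2.1))
      (by fun_prop) fun p => ⟨p.1.2, p.2.2⟩
  have hdiag : diagonal X ⊆ {p : X × X | rhoMetric α p.1.1 p.2.1 < δ} := by
    rw [diagonal_subset_iff]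
    exact fun x => (rhoMetric_self α x.1).trans_lt hδ
  obtain ⟨A, hA⟩ := exists_finset_forall_apply_eq_imp_mem_of_isOpen hf.domRestrict hinj.injective
    (isOpen_lt hρ continuous_const) hdiag
  exact ⟨A, fun x hx y hy => hA ⟨x, hx⟩ ⟨y, hy⟩⟩

end ShiftMetric

theorem shift_apply_eq_of_projTo_image2_eq {G L : Type*} [Group G] {A E : Set G} {u v : G → L}
    (h : projTo (image2 (· * ·) A E) u = projTo (image2 (· * ·) A E) v) {a g : G} (ha : a ∈ A)
    (hg : g ∈ E) : shift g u a = shift g v a :=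
  congrFun h ⟨a * g, mem_image2_of_mem ha hg⟩

theorem proj_comp_embedding_is_delta_embedding_general {G K L : Type*} [Group G]
    [PseudoMetricSpace K] [TopologicalSpace L] [T2Space L] {X : Set (G → K)} (hX : IsCompact X)
    (hshift : ∀ g : G, ∀ x ∈ X, shift g x ∈ X) {α : G → ℝ} (hα : Summable α)
    {f : (G → K) → (G → L)} (hfc : ContinuousOn f X) (hfi : InjOn f X)
    (hfe : ∀ g : G, ∀ x ∈ X, f (shift g x) = shift g (f x)) {δ : ℝ} (hδ : 0 < δ) :
    ∃ A : Set G, A.Finite ∧ A.Nonempty ∧ ∀ E : Set G, E.Finite → E.Nonempty →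
      IsEpsEmb (fun x y : X => rhoMetricF α E x.1 y.1) δ
        (fun x : X => projTo (image2 (· * ·) A E) (f x.1)) := by
  obtain ⟨D, hD⟩ := exists_forall_dist_apply_le_of_shift_mem hX hshift
  obtain ⟨A, hA⟩ := exists_finset_forall_apply_eq_imp_rhoMetric_lt hX hα hD hfc hfi hδ
  refine ⟨insert 1 (A : Set G), A.finite_toSet.insert 1, insert_nonempty _ _,
    fun E hE hEne => ⟨?_, fun x y hxy => ?_⟩⟩
  · exact continuous_pi fun g => (continuous_apply g.1).comp hfc.domRestrict
  · refine (rhoMetricF_lt_iff hE hEne).mpr fun g hg =>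
      hA _ (hshift g x x.2) _ (hshift g y y.2) fun a ha => ?_
    rw [hfe g x x.2, hfe g y y.2]
    exact shift_apply_eq_of_projTo_image2_eq hxy (mem_insert_of_mem _ ha) hg

/-- **Lemma (from Part 4 of the main proof).** If `f` is an embedding of a subshift
`X ⊆ K^G` into the full `G`-shift on `[0,1]^G`, then for every `δ > 0` there is a nonempty
finite `A ⊆ G` such that for every nonempty finite `E ⊆ G` the composition `π_{AE} ∘ f` is a
`δ`-embedding of `(X, ρ_E)` into `[0,1]^{AE}`. -/
theorem proj_comp_embedding_is_delta_embedding (G K : Type*) [Group G] [Countable G]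
    [Infinite G] [MetricSpace K] [CompactSpace K]
    (X : Set (G → K)) (hX : IsSubshift K X)
    (α : G → ℝ) (hα : IsGoodWeight α)
    (f : (G → K) → (G → Set.Icc (0 : ℝ) 1))
    (hfc : ContinuousOn f X) (hfi : Set.InjOn f X)
    (hfe : ∀ g : G, ∀ x ∈ X, f (shift g x) = shift g (f x)) :
    ∀ δ > (0 : ℝ), ∃ A : Set G, A.Finite ∧ A.Nonempty ∧
      ∀ E : Set G, E.Finite → E.Nonempty →
        IsEpsEmb (fun x y : X => rhoMetricF α E x.1 y.1) δ
          (fun x : X => projTo (Set.image2 (· * ·) A E) (f x.1)) :=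
  fun _ => proj_comp_embedding_is_delta_embedding_general hX.1.isCompact hX.2 hα.2.2 hfc hfi hfe
end
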